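/- arXiv:math/0503341 — 3 statements merged into one kernel-verified Lean document; each statement's English description precedes it below -/
import Mathlib

section
/- Let S be any subset of SU(2) and let Z = {g ∈ SU(2) : g·s = s·g for all s ∈ S} be its centralizer. Then either Z is a connected topological space (in the subspace topology of SU(2)), or Z = {1, -1}, where 1 is the identity matrix and -1 its negative. -/
open Matrix

/-!
Inside the 2 × 2 complex matrices, the condition `Aᴴ = adjugate A` is real-linear and cuts out a
copy of the quaternions, on which `Aᴴ * A = det A • 1`; by the C⋆-identity `det A` is then the
square of the operator norm, so `SU(2)` is the unit sphere of this real subspace. Commuting with a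
given set is also a linear condition, so the centralizer is the unit sphere of a smaller real
subspace containing `1`. Such a sphere is connected if the subspace has dimension at least two, and
is `{1, -1}` if it is the line through `1`.
-/

section Sphere

open Metric

variable {E : Type*} [NormedAddCommGroup E] [NormedSpace ℝ E] {V : Submodule ℝ E}

lemma isConnected_submodule_inter_sphere (hV : 1 < Module.rank ℝ V) {r : ℝ} (hr : 0 ≤ r) :
    IsConnected ((V : Set E) ∩ sphere 0 r) := by
  have himage : ((↑) : V → E) '' sphere 0 r = (V : Set E) ∩ sphere 0 r := by
    ext w
    simp [and_comm]
  rw [← himage]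
  exact (isConnected_sphere hV 0 hr).image _ continuous_subtype_val.continuousOn

lemma eq_or_eq_neg_of_norm_eq_of_rank_le_one (hV : Module.rank ℝ V ≤ 1) {v w : E}
    (hv : v ∈ V) (hw : w ∈ V) (h : ‖w‖ = ‖v‖) : w = v ∨ w = -v := by
  obtain ⟨u, hu⟩ := (rank_submodule_le_one_iff' V).1 hV
  obtain ⟨a, rfl⟩ := Submodule.mem_span_singleton.1 (hu hv)
  obtain ⟨b, rfl⟩ := Submodule.mem_span_singleton.1 (hu hw)
  rw [norm_smul, norm_smul, mul_eq_mul_right_iff, norm_eq_zero] at h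
  rcases h with hab | rfl
  · rcases abs_eq_abs.1 hab with rfl | rfl
    · exact .inl rfl
    · exact .inr (neg_smul _ _)
  · simp

lemma submodule_inter_sphere_eq_pair (hV : Module.rank ℝ V ≤ 1) {v : E} (hv : v ∈ V) :
    (V : Set E) ∩ sphere 0 ‖v‖ = {v, -v} := by
  ext w
  simp only [Set.mem_inter_iff, SetLike.mem_coe, mem_sphere_zero_iff_norm, Set.mem_insert_iff,
    Set.mem_singleton_iff]
  constructor
  · rintro ⟨hw, h⟩
    exact eq_or_eq_neg_of_norm_eq_of_rank_le_one hV hv hw h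
  · rintro (rfl | rfl)
    · exact ⟨hv, rfl⟩
    · exact ⟨V.neg_mem hv, norm_neg v⟩

end Sphere

section Adjugate

variable {n : Type*} [Fintype n] [DecidableEq n]

lemma mul_eq_one_iff_eq_adjugate {R : Type*} [CommRing R] {A B : Matrix n n R} (hA : A.det = 1) :
    B * A = 1 ↔ B = A.adjugate := by
  constructor
  · intro h
    calc
      B = B * (A * A.adjugate) := by rw [mul_adjugate, hA, one_smul, mul_one]
      _ = A.adjugate := by rw [← mul_assoc, h, one_mul]
  · rintro rfl
    rw [adjugate_mul, hA, one_smul]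

lemma adjugate_add_fin_two {R : Type*} [CommRing R] (A B : Matrix (Fin 2) (Fin 2) R) :
    (A + B).adjugate = A.adjugate + B.adjugate := by
  simp only [adjugate_fin_two]
  ext i j
  fin_cases i <;> fin_cases j <;> simp [add_comm]

variable {𝕜 : Type*} [RCLike 𝕜] [Nonempty n] {A : Matrix n n 𝕜}

open scoped ComplexOrder in
lemma det_nonneg_of_conjTranspose_eq_adjugate (hA : Aᴴ = A.adjugate) : 0 ≤ A.det := by
  have hpos : (A.det • (1 : Matrix n n 𝕜)).PosSemidef := by
    rw [← adjugate_mul, ← hA]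
    exact posSemidef_conjTranspose_mul_self A
  obtain ⟨i⟩ := ‹Nonempty n›
  simpa using hpos.diag_nonneg (i := i)

open scoped Matrix.Norms.L2Operator

open scoped ComplexOrder in
lemma det_eq_norm_sq_of_conjTranspose_eq_adjugate (hA : Aᴴ = A.adjugate) :
    A.det = ((‖A‖ ^ 2 : ℝ) : 𝕜) := by
  have hnorm : ‖A‖ ^ 2 = ‖A.det‖ := by
    rw [sq, ← l2_opNorm_conjTranspose_mul_self, hA, adjugate_mul, norm_smul, CStarRing.norm_one,
      mul_one]
  rw [hnorm, RCLike.norm_of_nonneg' (det_nonneg_of_conjTranspose_eq_adjugate hA)]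

lemma mem_specialUnitaryGroup_iff_conjTranspose_eq_adjugate :
    A ∈ specialUnitaryGroup n 𝕜 ↔ Aᴴ = A.adjugate ∧ ‖A‖ = 1 := by
  rw [mem_specialUnitaryGroup_iff, mem_unitaryGroup_iff', star_eq_conjTranspose]
  have hdet (hA : Aᴴ = A.adjugate) : A.det = 1 ↔ ‖A‖ = 1 := by
    rw [det_eq_norm_sq_of_conjTranspose_eq_adjugate hA, ← RCLike.ofReal_one, RCLike.ofReal_inj,
      pow_eq_one_iff_of_nonneg (norm_nonneg A) two_ne_zero]
  constructor
  · rintro ⟨hunit, hone⟩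
    have hA := (mul_eq_one_iff_eq_adjugate hone).1 hunit
    exact ⟨hA, (hdet hA).1 hone⟩
  · rintro ⟨hA, hone⟩
    exact ⟨(mul_eq_one_iff_eq_adjugate ((hdet hA).2 hone)).2 hA, (hdet hA).2 hone⟩

end Adjugate

/-- The quaternions, realised as the real subspace of complex matrices of the form
`!![a, b; -star b, star a]`; the condition `Aᴴ = adjugate A` expresses this shape without
coordinates. -/
def quaternionMatrices : Submodule ℝ (Matrix (Fin 2) (Fin 2) ℂ) where
  carrier := {A | Aᴴ = A.adjugate}
  zero_mem' := by simp
  add_mem' {A B} (hA : Aᴴ = A.adjugate) (hB : Bᴴ = B.adjugate) := by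
    rw [Set.mem_ofPred_eq, conjTranspose_add, hA, hB, adjugate_add_fin_two]
  smul_mem' r A (hA : Aᴴ = A.adjugate) := by
    rw [Set.mem_ofPred_eq, conjTranspose_smul, hA, ← Complex.coe_smul r A, adjugate_smul]
    simp

open scoped Matrix.Norms.L2Operator in
lemma specialUnitaryGroup_fin_two_eq :
    (specialUnitaryGroup (Fin 2) ℂ : Set (Matrix (Fin 2) (Fin 2) ℂ)) =
      (quaternionMatrices : Set (Matrix (Fin 2) (Fin 2) ℂ)) ∩ Metric.sphere 0 1 := by
  ext A
  rw [Set.mem_inter_iff, mem_sphere_zero_iff_norm]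
  exact mem_specialUnitaryGroup_iff_conjTranspose_eq_adjugate

-- The L2 operator norm induces the entrywise topology definitionally, so connectedness of a sphere
-- for this norm is connectedness in the usual topology on matrices.
open scoped Matrix.Norms.L2Operator in
lemma isConnected_submodule_inter_specialUnitaryGroup_or_eq_pair
    {V : Submodule ℝ (Matrix (Fin 2) (Fin 2) ℂ)} (hV : 1 ∈ V) :
    IsConnected ((V : Set (Matrix (Fin 2) (Fin 2) ℂ)) ∩ specialUnitaryGroup (Fin 2) ℂ) ∨
      (V : Set (Matrix (Fin 2) (Fin 2) ℂ)) ∩ specialUnitaryGroup (Fin 2) ℂ = {1, -1} := by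
  have hone : 1 ∈ V ⊓ quaternionMatrices := ⟨hV, by simp [quaternionMatrices]⟩
  rw [specialUnitaryGroup_fin_two_eq, ← Set.inter_assoc, ← Submodule.coe_inf]
  rcases lt_or_ge 1 (Module.rank ℝ ↥(V ⊓ quaternionMatrices)) with hrank | hrank
  · exact .inl (isConnected_submodule_inter_sphere hrank zero_le_one)
  · right
    simpa only [CStarRing.norm_one] using submodule_inter_sphere_eq_pair hrank hone

theorem su2_centralizer_connected_or_center_general (S : Set (Matrix (Fin 2) (Fin 2) ℂ)) :
    IsConnected {g : Matrix (Fin 2) (Fin 2) ℂ |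
        (gᴴ * g = 1 ∧ g.det = 1) ∧ ∀ s ∈ S, g * s = s * g} ∨
    {g : Matrix (Fin 2) (Fin 2) ℂ |
        (gᴴ * g = 1 ∧ g.det = 1) ∧ ∀ s ∈ S, g * s = s * g} = {1, -1} := by
  let V := Subalgebra.toSubmodule (Subalgebra.centralizer ℝ S)
  have hset : {g : Matrix (Fin 2) (Fin 2) ℂ |
      (gᴴ * g = 1 ∧ g.det = 1) ∧ ∀ s ∈ S, g * s = s * g} =
        (V : Set (Matrix (Fin 2) (Fin 2) ℂ)) ∩ specialUnitaryGroup (Fin 2) ℂ := by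
    ext g
    simp only [V, Set.mem_ofPred_eq, Set.mem_inter_iff, SetLike.mem_coe,
      Subalgebra.mem_toSubmodule, Subalgebra.mem_centralizer_iff, mem_specialUnitaryGroup_iff,
      mem_unitaryGroup_iff', star_eq_conjTranspose, eq_comm (a := g * _), and_comm]
  rw [hset]
  exact isConnected_submodule_inter_specialUnitaryGroup_or_eq_pair
    (one_mem (Subalgebra.centralizer ℝ S))

/-- The centralizer of any subset of `SU(2)` is either connected
(in the subspace topology) or equal to `{1, -1}`. -/
theorem su2_centralizer_connected_or_center
    (S : Set (Matrix (Fin 2) (Fin 2) ℂ))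
    (hS : ∀ s ∈ S, sᴴ * s = 1 ∧ s.det = 1) :
    IsConnected {g : Matrix (Fin 2) (Fin 2) ℂ |
        (gᴴ * g = 1 ∧ g.det = 1) ∧ ∀ s ∈ S, g * s = s * g} ∨
    {g : Matrix (Fin 2) (Fin 2) ℂ |
        (gᴴ * g = 1 ∧ g.det = 1) ∧ ∀ s ∈ S, g * s = s * g} = {1, -1} :=
  su2_centralizer_connected_or_center_general S
end

section
/- Let H be a subgroup of SO(3) whose underlying set is connected in the subspace topology. Then the centralizer Z = {g ∈ SO(3) : g·h = h·g for all h ∈ H} is a connected topological space (in the subspace topology of SO(3)). -/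
open Matrix

/-!
Let `H` be a connected set of rotations containing `1`. If every `h ∈ H` is symmetric, then
`(tr h - 1)² = 4` on `H`, so by connectedness `tr h = 3` and `h = 1`; the centralizer is then all of
`SO(3)`, which is connected because each rotation lies in the circle of rotations about its axis.
Otherwise some `h ∈ H` has a nonzero axial vector `v` (the vector of its skew part), which is fixed
by every rotation commuting with `h`. If `k v` is parallel to `v` for all `k ∈ H`, then `k v = v` by
connectedness, and the centralizer is the circle of rotations about `v`. If some `k v` is not
parallel to `v`, a rotation commuting with `H` fixes both `v` and `k v`, so it is `1`.
-/

section OrthogonalGroup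

variable {n R : Type*} [Fintype n] [DecidableEq n] [CommRing R] {A Q : Matrix n n R}

lemma transpose_mul_self_of_mem_specialOrthogonalGroup (hA : A ∈ specialOrthogonalGroup n R) :
    Aᵀ * A = 1 :=
  (mem_orthogonalGroup_iff' n R).mp hA.1

lemma det_eq_one_of_mem_specialOrthogonalGroup (hA : A ∈ specialOrthogonalGroup n R) :
    A.det = 1 :=
  (mem_specialOrthogonalGroup_iff.mp hA).2

lemma mulVec_dotProduct_mulVec_of_mem_orthogonalGroup (hA : A ∈ orthogonalGroup n R)
    (v w : n → R) : (A *ᵥ v) ⬝ᵥ (A *ᵥ w) = v ⬝ᵥ w := by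
  rw [dotProduct_mulVec, ← mulVec_transpose, mulVec_mulVec, (mem_orthogonalGroup_iff' n R).mp hA,
    one_mulVec]

lemma mulVec_eq_self_of_dotProduct_mulVec_eq [LinearOrder R] [IsStrictOrderedRing R]
    {k : Matrix n n R} (hk : k ∈ orthogonalGroup n R) {v : n → R}
    (hv : v ⬝ᵥ (k *ᵥ v) = v ⬝ᵥ v) : k *ᵥ v = v := by
  rw [← sub_eq_zero, ← dotProduct_self_eq_zero, sub_dotProduct, dotProduct_sub, dotProduct_sub,
    mulVec_dotProduct_mulVec_of_mem_orthogonalGroup hk, dotProduct_comm (k *ᵥ v) v, hv]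
  ring

lemma adjugate_eq_transpose_of_mem_specialOrthogonalGroup (hA : A ∈ specialOrthogonalGroup n R) :
    A.adjugate = Aᵀ := by
  have hmul : A * A.adjugate = 1 := by
    rw [mul_adjugate, det_eq_one_of_mem_specialOrthogonalGroup hA, one_smul]
  exact (left_inv_eq_right_inv (transpose_mul_self_of_mem_specialOrthogonalGroup hA) hmul).symm

lemma transpose_mem_orthogonalGroup (hQ : Q ∈ orthogonalGroup n R) : Qᵀ ∈ orthogonalGroup n R := by
  rwa [mem_orthogonalGroup_iff, transpose_transpose, ← mem_orthogonalGroup_iff']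

lemma conj_mem_specialOrthogonalGroup (hQ : Q ∈ orthogonalGroup n R)
    (hA : A ∈ specialOrthogonalGroup n R) : Q * A * Qᵀ ∈ specialOrthogonalGroup n R := by
  refine mem_specialOrthogonalGroup_iff.mpr
    ⟨mul_mem (mul_mem hQ hA.1) (transpose_mem_orthogonalGroup hQ), ?_⟩
  rw [det_mul_right_comm, (mem_orthogonalGroup_iff n R).mp hQ, one_mul,
    det_eq_one_of_mem_specialOrthogonalGroup hA]

lemma exists_mulVec_eq_self_of_odd_card [IsDomain R] [NeZero (2 : R)]
    (hn : Odd (Fintype.card n)) (hA : A ∈ specialOrthogonalGroup n R) :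
    ∃ v ≠ 0, A *ᵥ v = v := by
  have hskew : Aᵀ * (A - 1) = -(A - 1)ᵀ := by
    rw [mul_sub, transpose_mul_self_of_mem_specialOrthogonalGroup hA, transpose_sub, transpose_one,
      mul_one, neg_sub]
  have hneg : (A - 1).det = -(A - 1).det := by
    simpa only [det_mul, det_transpose, det_neg, det_eq_one_of_mem_specialOrthogonalGroup hA,
      hn.neg_one_pow, one_mul, neg_one_mul] using congrArg det hskew
  have hdet : (A - 1).det = 0 := by
    have htwo : 2 * (A - 1).det = 0 := by linear_combination hneg
    exact (mul_eq_zero.mp htwo).resolve_left two_ne_zero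
  obtain ⟨v, hv, hAv⟩ := exists_mulVec_eq_zero_iff.mpr hdet
  exact ⟨v, hv, sub_eq_zero.mp (by rwa [sub_mulVec, one_mulVec] at hAv)⟩

lemma eq_one_of_trace_eq_card {A : Matrix n n ℝ} (hA : A ∈ orthogonalGroup n ℝ)
    (htr : A.trace = Fintype.card n) : A = 1 := by
  have hexpand : (A - 1)ᵀ * (A - 1) = 1 - A - Aᵀ + 1 := by
    rw [transpose_sub, transpose_one, sub_mul, mul_sub, (mem_orthogonalGroup_iff' n ℝ).mp hA]
    noncomm_ring
  have hzero : ((A - 1)ᴴ * (A - 1)).trace = 0 := by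
    rw [conjTranspose_eq_transpose_of_trivial, hexpand]
    simp only [trace_add, trace_sub, trace_transpose, trace_one, htr]
    ring
  exact sub_eq_zero.mp (trace_conjTranspose_mul_self_eq_zero_iff.mp hzero)

end OrthogonalGroup

section Householder

variable {n K : Type*} [Fintype n] [DecidableEq n] [Field K]

/-- The Householder matrix of the reflection in the hyperplane orthogonal to `w`; it is the identity
when `w ⬝ᵥ w = 0`, by division by zero. -/
def householder (w : n → K) : Matrix n n K :=
  1 - (2 / (w ⬝ᵥ w)) • vecMulVec w w

lemma householder_mem_orthogonalGroup (w : n → K) : householder w ∈ orthogonalGroup n K := by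
  have hcoef : 2 / (w ⬝ᵥ w) * (2 / (w ⬝ᵥ w) * (w ⬝ᵥ w)) = 2 * (2 / (w ⬝ᵥ w)) := by
    rcases eq_or_ne (w ⬝ᵥ w) 0 with hw | hw
    · simp [hw]
    · field_simp
  rw [mem_orthogonalGroup_iff]
  simp only [householder, transpose_sub, transpose_one, transpose_smul, transpose_vecMulVec,
    sub_mul, mul_sub, one_mul, mul_one, Matrix.smul_mul, Matrix.mul_smul, vecMulVec_mul_vecMulVec,
    vecMulVec_smul, smul_smul, hcoef, two_mul, add_smul]
  abel

lemma householder_sub_mulVec [LinearOrder K] [IsStrictOrderedRing K] {u v : n → K}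
    (h : u ⬝ᵥ u = v ⬝ᵥ v) : householder (u - v) *ᵥ u = v := by
  rcases eq_or_ne u v with rfl | huv
  · simp [householder]
  have hw : (u - v) ⬝ᵥ (u - v) ≠ 0 := by rwa [Ne, dotProduct_self_eq_zero, sub_eq_zero]
  have hnorm : (u - v) ⬝ᵥ (u - v) = 2 * ((u - v) ⬝ᵥ u) := by
    simp only [sub_dotProduct, dotProduct_sub, dotProduct_comm u v, h]
    ring
  have hcoef : 2 / ((u - v) ⬝ᵥ (u - v)) * ((u - v) ⬝ᵥ u) = 1 := by
    rw [div_mul_eq_mul_div, ← hnorm, div_self hw]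
  rw [householder, sub_mulVec, one_mulVec, smul_mulVec, vecMulVec_mulVec, op_smul_eq_smul,
    smul_smul, hcoef, one_smul, sub_sub_cancel]

end Householder

section CrossProduct

variable {R : Type*} [CommRing R]

/-- The vector `a` of the skew part of a `3 × 3` matrix, normalised by `(A - Aᵀ) x = a ⨯₃ x`. For a
rotation other than `1` and the half-turns it spans the axis. -/
def axialVector (A : Matrix (Fin 3) (Fin 3) R) : Fin 3 → R :=
  ![A 2 1 - A 1 2, A 0 2 - A 2 0, A 1 0 - A 0 1]

lemma isSymm_of_axialVector_eq_zero {A : Matrix (Fin 3) (Fin 3) R} (hA : axialVector A = 0) :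
    A.IsSymm := by
  simp only [axialVector, cons_eq_zero_iff, sub_eq_zero] at hA
  obtain ⟨h21, h02, h10, -⟩ := hA
  refine IsSymm.ext fun i j => ?_
  fin_cases i <;> fin_cases j <;> simp [h21, h02, h10]

lemma axialVector_vecMulVec (v w : Fin 3 → R) : axialVector (vecMulVec w v) = v ⨯₃ w := by
  ext i
  fin_cases i <;> simp [axialVector, cross_apply, vecMulVec_apply] <;> ring

lemma axialVector_mul_mul_transpose (A B : Matrix (Fin 3) (Fin 3) R) :
    axialVector (B * A * Bᵀ) = B.adjugateᵀ *ᵥ axialVector A := by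
  ext i
  fin_cases i <;>
    simp [axialVector, adjugate_fin_three, mul_apply, mulVec, dotProduct, Fin.sum_univ_three] <;>
    ring

lemma mulVec_cross_mulVec (A : Matrix (Fin 3) (Fin 3) R) (v w : Fin 3 → R) :
    (A *ᵥ v) ⨯₃ (A *ᵥ w) = A.adjugateᵀ *ᵥ (v ⨯₃ w) := by
  rw [← axialVector_vecMulVec, ← axialVector_vecMulVec, ← axialVector_mul_mul_transpose,
    mul_vecMulVec, vecMulVec_mul, vecMul_transpose]

lemma dotProduct_mulVec_sq_of_cross_eq_zero {k : Matrix (Fin 3) (Fin 3) R}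
    (hk : k ∈ orthogonalGroup (Fin 3) R) {v : Fin 3 → R} (hv : v ⨯₃ (k *ᵥ v) = 0) :
    (v ⬝ᵥ (k *ᵥ v)) ^ 2 = (v ⬝ᵥ v) ^ 2 := by
  have hlagrange := cross_dot_cross v (k *ᵥ v) v (k *ᵥ v)
  rw [hv, zero_dotProduct, mulVec_dotProduct_mulVec_of_mem_orthogonalGroup hk,
    dotProduct_comm (k *ᵥ v) v] at hlagrange
  linear_combination hlagrange

lemma mulVec_axialVector_of_commute {g A : Matrix (Fin 3) (Fin 3) R}
    (hg : g ∈ specialOrthogonalGroup (Fin 3) R) (hcomm : Commute g A) :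
    g *ᵥ axialVector A = axialVector A := by
  have hconj : g * A * gᵀ = A := by
    rw [hcomm.eq, mul_assoc, (mem_orthogonalGroup_iff _ R).mp hg.1, mul_one]
  simpa only [hconj, adjugate_eq_transpose_of_mem_specialOrthogonalGroup hg, transpose_transpose]
    using (axialVector_mul_mul_transpose A g).symm

lemma two_mul_trace_adjugate_fin_three (A : Matrix (Fin 3) (Fin 3) R) :
    2 * A.adjugate.trace = A.trace ^ 2 - (A * A).trace := by
  simp only [adjugate_fin_three, trace_fin_three, of_apply, cons_val', cons_val_zero,
    cons_val_fin_one, cons_val_one, cons_val, mul_apply, Fin.sum_univ_three]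
  ring

lemma trace_sub_one_sq_of_isSymm {g : Matrix (Fin 3) (Fin 3) R}
    (hg : g ∈ specialOrthogonalGroup (Fin 3) R) (hsymm : g.IsSymm) : (g.trace - 1) ^ 2 = 4 := by
  have hinvol : g * g = 1 := by
    simpa only [hsymm.eq] using transpose_mul_self_of_mem_specialOrthogonalGroup hg
  have htr := two_mul_trace_adjugate_fin_three g
  rw [adjugate_eq_transpose_of_mem_specialOrthogonalGroup hg, trace_transpose, hinvol, trace_one,
    Fintype.card_fin] at htr
  push_cast at htr
  linear_combination -htr

lemma eq_one_of_mulVec_eq_self_of_cross_ne_zero {K : Type*} [Field K] [LinearOrder K]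
    [IsStrictOrderedRing K] {g : Matrix (Fin 3) (Fin 3) K}
    (hg : g ∈ specialOrthogonalGroup (Fin 3) K) {v w : Fin 3 → K} (hv : g *ᵥ v = v)
    (hw : g *ᵥ w = w) (hvw : v ⨯₃ w ≠ 0) : g = 1 := by
  have hcross : g *ᵥ (v ⨯₃ w) = v ⨯₃ w := by
    simpa only [hv, hw, adjugate_eq_transpose_of_mem_specialOrthogonalGroup hg,
      transpose_transpose] using (mulVec_cross_mulVec g v w).symm
  let B : Matrix (Fin 3) (Fin 3) K := ![v ⨯₃ w, v, w]
  have hB : B * gᵀ = B := by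
    funext i
    rw [mul_apply_eq_vecMul, vecMul_transpose]
    fin_cases i
    exacts [hcross, hv, hw]
  have hdet : IsUnit B.det := by
    rw [← triple_product_eq_det, isUnit_iff_ne_zero, Ne, dotProduct_self_eq_zero]
    exact hvw
  have htranspose : gᵀ = 1 :=
    ((isUnit_iff_isUnit_det B).mpr hdet).mul_left_cancel (hB.trans (mul_one B).symm)
  rwa [transpose_eq_one] at htranspose

end CrossProduct

section RotationsFixing

variable {n R : Type*} [Fintype n] [DecidableEq n] [CommRing R]

/-- The stabiliser of `v` in the special orthogonal group, as a set of matrices; in dimension three,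
the rotations about the axis `v`. -/
def rotationsFixing (v : n → R) : Set (Matrix n n R) :=
  {g | g ∈ specialOrthogonalGroup n R ∧ g *ᵥ v = v}

lemma rotationsFixing_smul [IsDomain R] {c : R} (hc : c ≠ 0) (v : n → R) :
    rotationsFixing (c • v) = rotationsFixing v := by
  ext g
  simp only [rotationsFixing, Set.mem_ofPred_eq, mulVec_smul, smul_right_inj hc]

lemma conj_mem_rotationsFixing {Q g : Matrix n n R} (hQ : Q ∈ orthogonalGroup n R) {v : n → R}
    (hg : g ∈ rotationsFixing v) : Q * g * Qᵀ ∈ rotationsFixing (Q *ᵥ v) := by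
  refine ⟨conj_mem_specialOrthogonalGroup hQ hg.1, ?_⟩
  rw [mulVec_mulVec, mul_assoc, (mem_orthogonalGroup_iff' n R).mp hQ, mul_one, ← mulVec_mulVec,
    hg.2]

lemma rotationsFixing_mulVec {Q : Matrix n n R} (hQ : Q ∈ orthogonalGroup n R) (v : n → R) :
    rotationsFixing (Q *ᵥ v) = (fun g => Q * g * Qᵀ) '' rotationsFixing v := by
  have hQQ : Q * Qᵀ = 1 := (mem_orthogonalGroup_iff n R).mp hQ
  refine subset_antisymm (fun g hg => ⟨Qᵀ * g * Q, ?_, ?_⟩)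
    (Set.image_subset_iff.mpr fun g hg => conj_mem_rotationsFixing hQ hg)
  · simpa only [transpose_transpose, mulVec_mulVec, (mem_orthogonalGroup_iff' n R).mp hQ,
      one_mulVec] using conj_mem_rotationsFixing (transpose_mem_orthogonalGroup hQ) hg
  · calc Q * (Qᵀ * g * Q) * Qᵀ = (Q * Qᵀ) * g * (Q * Qᵀ) := by simp only [mul_assoc]
      _ = g := by rw [hQQ, one_mul, mul_one]

lemma exists_rotationsFixing_eq_image_conj {u v : n → ℝ} (hu : u ≠ 0) (hv : v ≠ 0) :
    ∃ Q ∈ orthogonalGroup n ℝ, rotationsFixing v = (fun g => Q * g * Qᵀ) '' rotationsFixing u := by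
  have hpos {w : n → ℝ} (hw : w ≠ 0) : 0 < w ⬝ᵥ w := by
    simpa only [star_trivial] using dotProduct_star_self_pos_iff.mpr hw
  obtain ⟨c, hc, hcu⟩ : ∃ c : ℝ, c ≠ 0 ∧ (c • u) ⬝ᵥ (c • u) = v ⬝ᵥ v := by
    refine ⟨√(v ⬝ᵥ v / (u ⬝ᵥ u)), (Real.sqrt_pos.mpr (div_pos (hpos hv) (hpos hu))).ne', ?_⟩
    rw [smul_dotProduct, dotProduct_smul, smul_eq_mul, smul_eq_mul, ← mul_assoc,
      Real.mul_self_sqrt (div_pos (hpos hv) (hpos hu)).le, div_mul_cancel₀ _ (hpos hu).ne']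
  have hQ := householder_mem_orthogonalGroup (c • u - v)
  refine ⟨_, hQ, ?_⟩
  rw [← rotationsFixing_smul hc u, ← rotationsFixing_mulVec hQ, householder_sub_mulVec hcu]

lemma eq_one_of_mem_rotationsFixing_of_commute {K : Type*} [Field K] [LinearOrder K]
    [IsStrictOrderedRing K] {g k : Matrix (Fin 3) (Fin 3) K} {v : Fin 3 → K}
    (hg : g ∈ rotationsFixing v) (hcomm : Commute g k) (hkv : v ⨯₃ (k *ᵥ v) ≠ 0) : g = 1 := by
  have hgk : g *ᵥ (k *ᵥ v) = k *ᵥ v := by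
    rw [mulVec_mulVec, hcomm.eq, ← mulVec_mulVec, hg.2]
  exact eq_one_of_mulVec_eq_self_of_cross_ne_zero hg.1 hg.2 hgk hkv

end RotationsFixing

section RotationsAboutAnAxis

/-- The rotation of `ℝ³` about the third coordinate axis through the angle of `z`. -/
def zRotation (z : Circle) : Matrix (Fin 3) (Fin 3) ℝ :=
  !![(z : ℂ).re, -(z : ℂ).im, 0; (z : ℂ).im, (z : ℂ).re, 0; 0, 0, 1]

lemma zRotation_mul (z w : Circle) : zRotation (z * w) = zRotation z * zRotation w := by
  ext i j
  fin_cases i <;> fin_cases j <;>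
    simp [zRotation, mul_apply, Fin.sum_univ_three] <;> ring

@[fun_prop]
lemma continuous_zRotation : Continuous zRotation := by
  unfold zRotation
  fun_prop

lemma zRotation_mem_rotationsFixing (z : Circle) : zRotation z ∈ rotationsFixing ![0, 0, 1] := by
  have hz : (z : ℂ).re * (z : ℂ).re + (z : ℂ).im * (z : ℂ).im = 1 := by
    rw [← Complex.normSq_apply, Circle.normSq_coe]
  refine ⟨⟨(mem_orthogonalGroup_iff _ ℝ).mpr ?_, ?_⟩, ?_⟩
  · ext i j
    fin_cases i <;> fin_cases j <;>
      simp [zRotation, mul_apply, Fin.sum_univ_three] <;> linarith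
  · simp [zRotation, det_fin_three, hz]
  · ext i
    fin_cases i <;> simp [zRotation, mulVec, dotProduct, Fin.sum_univ_three]

lemma exists_eq_zRotation {g : Matrix (Fin 3) (Fin 3) ℝ}
    (hg : g ∈ rotationsFixing ![0, 0, 1]) : ∃ z, zRotation z = g := by
  obtain ⟨hSO, hfix⟩ := hg
  have hcol (i : Fin 3) : g i 2 = ![0, 0, 1] i := by
    simpa [mulVec, dotProduct, Fin.sum_univ_three] using congrFun hfix i
  have h02 : g 0 2 = 0 := hcol 0
  have h12 : g 1 2 = 0 := hcol 1
  have h22 : g 2 2 = 1 := hcol 2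
  have hcof (i j : Fin 3) : g j i = g.adjugate i j := by
    rw [adjugate_eq_transpose_of_mem_specialOrthogonalGroup hSO, transpose_apply]
  have h20 : g 2 0 = 0 := by simpa [adjugate_fin_three, h02, h12] using hcof 0 2
  have h21 : g 2 1 = 0 := by simpa [adjugate_fin_three, h02, h12] using hcof 1 2
  have h11 : g 1 1 = g 0 0 := by simpa [adjugate_fin_three, h02, h22] using hcof 1 1
  have h01 : g 0 1 = -g 1 0 := by simpa [adjugate_fin_three, h12, h22] using hcof 1 0
  have hnorm : g 0 0 * g 0 0 + g 1 0 * g 1 0 = 1 := by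
    simpa [adjugate_fin_three, h22, h11, h01] using (hcof 2 2).symm
  obtain ⟨z, hz⟩ : ∃ z : Circle, (z : ℂ) = ⟨g 0 0, g 1 0⟩ := by
    refine ⟨⟨⟨g 0 0, g 1 0⟩, mem_sphere_zero_iff_norm.mpr ?_⟩, rfl⟩
    rw [Complex.norm_def, Complex.normSq_mk, hnorm, Real.sqrt_one]
  refine ⟨z, ?_⟩
  conv_rhs => rw [eta_fin_three g, h01, h02, h11, h12, h20, h21, h22]
  rw [zRotation, hz]

lemma rotationsFixing_e₃ : rotationsFixing ![0, 0, 1] = Set.range zRotation :=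
  subset_antisymm (fun _ hg => exists_eq_zRotation hg)
    (Set.range_subset_iff.mpr zRotation_mem_rotationsFixing)

lemma exists_rotationsFixing_eq_range_conj {v : Fin 3 → ℝ} (hv : v ≠ 0) :
    ∃ Q ∈ orthogonalGroup (Fin 3) ℝ,
      rotationsFixing v = Set.range fun z => Q * zRotation z * Qᵀ := by
  have he₃ : (![0, 0, 1] : Fin 3 → ℝ) ≠ 0 := fun h => one_ne_zero (congrFun h 2)
  obtain ⟨Q, hQ, himage⟩ := exists_rotationsFixing_eq_image_conj he₃ hv
  exact ⟨Q, hQ, by rw [himage, rotationsFixing_e₃, ← Set.range_comp]; rfl⟩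

lemma isConnected_rotationsFixing {v : Fin 3 → ℝ} (hv : v ≠ 0) :
    IsConnected (rotationsFixing v) := by
  obtain ⟨Q, -, hrange⟩ := exists_rotationsFixing_eq_range_conj hv
  rw [hrange]
  exact isConnected_range (by fun_prop)

lemma commute_of_mem_rotationsFixing {v : Fin 3 → ℝ} (hv : v ≠ 0)
    {g h : Matrix (Fin 3) (Fin 3) ℝ} (hg : g ∈ rotationsFixing v) (hh : h ∈ rotationsFixing v) :
    Commute g h := by
  obtain ⟨Q, hQ, hrange⟩ := exists_rotationsFixing_eq_range_conj hv
  rw [hrange] at hg hh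
  obtain ⟨z, rfl⟩ := hg
  obtain ⟨w, rfl⟩ := hh
  have hmul (z w : Circle) :
      Q * zRotation z * Qᵀ * (Q * zRotation w * Qᵀ) = Q * zRotation (z * w) * Qᵀ := by
    calc Q * zRotation z * Qᵀ * (Q * zRotation w * Qᵀ)
        = Q * zRotation z * (Qᵀ * Q) * zRotation w * Qᵀ := by simp only [mul_assoc]
      _ = Q * zRotation (z * w) * Qᵀ := by
        rw [(mem_orthogonalGroup_iff' _ ℝ).mp hQ, mul_one, zRotation_mul, mul_assoc Q]
  exact (hmul z w).trans (mul_comm z w ▸ (hmul w z).symm)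

lemma isConnected_specialOrthogonalGroup_fin_three :
    IsConnected (specialOrthogonalGroup (Fin 3) ℝ : Set (Matrix (Fin 3) (Fin 3) ℝ)) := by
  refine ⟨⟨1, one_mem _⟩, isPreconnected_of_forall 1 fun g hg => ?_⟩
  obtain ⟨v, hv, hgv⟩ := exists_mulVec_eq_self_of_odd_card (by decide) hg
  exact ⟨rotationsFixing v, fun _ h => h.1, ⟨one_mem _, one_mulVec v⟩, ⟨hg, hgv⟩,
    (isConnected_rotationsFixing hv).isPreconnected⟩

end RotationsAboutAnAxis

section ConnectedSets

variable {H : Set (Matrix (Fin 3) (Fin 3) ℝ)}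

lemma eq_one_of_isPreconnected_of_isSymm (hH : H ⊆ specialOrthogonalGroup (Fin 3) ℝ)
    (hone : 1 ∈ H) (hconn : IsPreconnected H) (hsymm : ∀ h ∈ H, h.IsSymm) : ∀ h ∈ H, h = 1 := by
  have htr : Set.EqOn (fun h => h.trace - 1) (fun _ => 2) H :=
    hconn.eq_of_sq_eq (by fun_prop) (by fun_prop)
      (fun h hh => by
        simpa only [Pi.pow_apply, show (2 : ℝ) ^ 2 = 4 by norm_num]
          using trace_sub_one_sq_of_isSymm (hH hh) (hsymm h hh))
      (fun _ => two_ne_zero) hone (by norm_num [trace_one])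
  refine fun h hh => eq_one_of_trace_eq_card (hH hh).1 ?_
  rw [Fintype.card_fin]
  push_cast
  linarith only [htr hh]

lemma mulVec_eq_self_of_isPreconnected_of_cross_eq_zero (hH : H ⊆ orthogonalGroup (Fin 3) ℝ)
    (hone : 1 ∈ H) (hconn : IsPreconnected H) {v : Fin 3 → ℝ}
    (hpar : ∀ k ∈ H, v ⨯₃ (k *ᵥ v) = 0) : ∀ k ∈ H, k *ᵥ v = v := by
  rcases eq_or_ne v 0 with rfl | hv
  · exact fun k _ => mulVec_zero k
  have hdot : Set.EqOn (fun k => v ⬝ᵥ (k *ᵥ v)) (fun _ => v ⬝ᵥ v) H :=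
    hconn.eq_of_sq_eq (by fun_prop) (by fun_prop)
      (fun k hk => dotProduct_mulVec_sq_of_cross_eq_zero (hH hk) (hpar k hk))
      (fun _ => dotProduct_self_eq_zero.not.mpr hv) hone (by simp only [one_mulVec])
  exact fun k hk => mulVec_eq_self_of_dotProduct_mulVec_eq (hH hk) (hdot hk)

end ConnectedSets

theorem so3_centralizer_of_connected_subgroup_connected_general
    {H : Set (Matrix (Fin 3) (Fin 3) ℝ)} (hH : H ⊆ specialOrthogonalGroup (Fin 3) ℝ)
    (hone : 1 ∈ H) (hconn : IsPreconnected H) :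
    IsConnected (specialOrthogonalGroup (Fin 3) ℝ ∩ H.centralizer) := by
  by_cases hsymm : ∀ h ∈ H, h.IsSymm
  · have hH1 := eq_one_of_isPreconnected_of_isSymm hH hone hconn hsymm
    rw [Set.inter_eq_left.mpr fun g _ h hh => by rw [hH1 h hh, one_mul, mul_one]]
    exact isConnected_specialOrthogonalGroup_fin_three
  push Not at hsymm
  obtain ⟨h, hh, hns⟩ := hsymm
  set v := axialVector h
  have hv : v ≠ 0 := mt isSymm_of_axialVector_eq_zero hns
  have hfix : ↑(specialOrthogonalGroup (Fin 3) ℝ) ∩ H.centralizer ⊆ rotationsFixing v :=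
    fun g hg => ⟨hg.1, mulVec_axialVector_of_commute hg.1 (hg.2 h hh).symm⟩
  by_cases hpar : ∀ k ∈ H, v ⨯₃ (k *ᵥ v) = 0
  · have hHv : H ⊆ rotationsFixing v := fun k hk => ⟨hH hk,
      mulVec_eq_self_of_isPreconnected_of_cross_eq_zero (fun _ h => (hH h).1) hone hconn hpar k hk⟩
    rw [hfix.antisymm fun g hg =>
      ⟨hg.1, fun k hk => commute_of_mem_rotationsFixing hv (hHv hk) hg⟩]
    exact isConnected_rotationsFixing hv
  · push Not at hpar
    obtain ⟨k, hk, hkv⟩ := hpar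
    have htrivial : ↑(specialOrthogonalGroup (Fin 3) ℝ) ∩ H.centralizer ⊆ {1} := fun g hg =>
      eq_one_of_mem_rotationsFixing_of_commute (hfix hg) (hg.2 k hk).symm hkv
    rw [htrivial.antisymm (Set.singleton_subset_iff.mpr ⟨one_mem _, Set.one_mem_centralizer⟩)]
    exact isConnected_singleton

/-- The centralizer of a connected subgroup of `SO(3)` is connected. -/
theorem so3_centralizer_of_connected_subgroup_connected
    (H : Set (Matrix (Fin 3) (Fin 3) ℝ))
    (hH : ∀ h ∈ H, hᵀ * h = 1 ∧ h.det = 1)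
    (hone : (1 : Matrix (Fin 3) (Fin 3) ℝ) ∈ H)
    (hmul : ∀ a ∈ H, ∀ b ∈ H, a * b ∈ H)
    (hinv : ∀ a ∈ H, aᵀ ∈ H)
    (hconn : IsConnected H) :
    IsConnected {g : Matrix (Fin 3) (Fin 3) ℝ |
        (gᵀ * g = 1 ∧ g.det = 1) ∧ ∀ h ∈ H, g * h = h * g} := by
  simp only [← mem_orthogonalGroup_iff', ← mem_specialOrthogonalGroup_iff] at hH ⊢
  simpa only [Set.inter_def, Set.mem_centralizer_iff, SetLike.mem_coe, eq_comm] using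
    so3_centralizer_of_connected_subgroup_connected_general hH hone hconn.isPreconnected
end

section
/- Let Φ : ℝ → M₂(ℂ) be a continuous map satisfying Φ(t + 2π) = Φ(t), Φ(t)* = -Φ(t), and tr Φ(t) = 0 for all t ∈ ℝ, and let u : ℝ → M₂(ℂ) be differentiable with u'(t) = -Φ(t)·u(t) for all t and u(0) = 1. Then there exists a 2×2 complex matrix ξ with ξ* = -ξ and tr ξ = 0 such that u(2π) = exp(2πξ), and the map w(φ) := u(φ)·exp(-φξ) satisfies w(φ + 2π) = w(φ), w(φ)*·w(φ) = 1, and det w(φ) = 1 for all φ ∈ ℝ. -/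
open Matrix Real

attribute [local instance] Matrix.normedAddCommGroup Matrix.normedSpace

/-!
For skew-Hermitian `Φ`, the product `u* v` of two solutions is constant; for traceless `Φ`,
Jacobi's formula makes `det u` constant. Hence `u` takes values in `SU(n)`, and comparing `u` with
its translate gives `u (t + T) = u t * u T`. The monodromy `u T` is diagonalized by a unitary
matrix with eigenvalues `exp (i θⱼ)`, where `∑ θⱼ` is a multiple of `2π`; changing a single angle
makes the sum zero and gives a logarithm `T ξ` of `u T` in `su(n)`. The curve `exp (-t ξ)` then
absorbs the monodromy and lies in `SU(n)`, since it solves a linear equation of the same kind.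
-/

section MatrixCalculus

variable {𝕜 m n : Type*} [NontriviallyNormedField 𝕜]

theorem hasDerivAt_matrix {E : Type*} [NormedAddCommGroup E] [NormedSpace 𝕜 E] [Finite n]
    {u : 𝕜 → Matrix m n E} {u' : Matrix m n E} {t : 𝕜} :
    HasDerivAt u u' t ↔ ∀ i j, HasDerivAt (fun s => u s i j) (u' i j) t := by
  have := Fintype.ofFinite n
  exact (hasDerivAt_pi (E' := fun _ : m => n → E)).trans (forall_congr' fun _ => hasDerivAt_pi)

theorem hasDerivAt_conjTranspose {E : Type*} [NormedAddCommGroup E] [NormedSpace ℝ E]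
    [StarAddMonoid E] [ContinuousStar E] [StarModule ℝ E] [Finite m] [Finite n]
    {u : ℝ → Matrix m n E} {u' : Matrix m n E} {t : ℝ} (hu : HasDerivAt u u' t) :
    HasDerivAt (fun s => (u s)ᴴ) u'ᴴ t :=
  hasDerivAt_matrix.2 fun i j => (hasDerivAt_matrix.1 hu j i).star

variable {R : Type*} [NormedCommRing R] [NormedAlgebra 𝕜 R]

theorem hasDerivAt_matrix_mul {l : Type*} [Fintype m] [Finite n]
    {u : 𝕜 → Matrix l m R} {v : 𝕜 → Matrix m n R} {u' : Matrix l m R} {v' : Matrix m n R} {t : 𝕜}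
    (hu : HasDerivAt u u' t) (hv : HasDerivAt v v' t) :
    HasDerivAt (fun s => u s * v s) (u' * v t + u t * v') t := by
  refine hasDerivAt_matrix.2 fun i j => ?_
  simp only [mul_apply, Matrix.add_apply, ← Finset.sum_add_distrib]
  exact HasDerivAt.fun_sum fun k _ =>
    (hasDerivAt_matrix.1 hu i k).mul (hasDerivAt_matrix.1 hv k j)

variable [Fintype n] [DecidableEq n]

theorem det_updateRow_eq_mul_adjugate_apply {S : Type*} [CommRing S] (A B : Matrix n n S)
    (i : n) :
    (A.updateRow i (B i)).det = (B * A.adjugate) i i := by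
  rw [← cramer_transpose_apply, cramer_eq_adjugate_mulVec, ← adjugate_transpose, mulVec_transpose,
    mul_apply_eq_vecMul]

theorem hasDerivAt_det {u : 𝕜 → Matrix n n R} {u' : Matrix n n R} {t : 𝕜}
    (hu : HasDerivAt u u' t) :
    HasDerivAt (fun s => (u s).det) (trace (u' * (u t).adjugate)) t := by
  let detRows : ContinuousMultilinearMap 𝕜 (fun _ : n => n → R) R :=
    { (detRowAlternating (n := n) (R := R)).toMultilinearMap.restrictScalars 𝕜 with
      cont := Continuous.matrix_det continuous_id }
  have hrows : detRows.linearDeriv (u t) u' = trace (u' * (u t).adjugate) :=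
    (detRows.linearDeriv_apply (u t) u').trans <|
      Finset.sum_congr rfl fun i _ => det_updateRow_eq_mul_adjugate_apply (u t) u' i
  exact hrows ▸ (detRows.hasFDerivAt (u t)).comp_hasDerivAt t hu

end MatrixCalculus

section LinearODE

open NormedSpace

variable {𝕜 m n k : Type*} [RCLike 𝕜] [Fintype n] {Φ : ℝ → Matrix n n 𝕜}

theorem eq_of_forall_hasDerivAt_zero {E : Type*} [NormedAddCommGroup E] [NormedSpace ℝ E]
    {f : ℝ → E} (hf : ∀ t, HasDerivAt f 0 t) (s t : ℝ) : f s = f t :=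
  is_const_of_deriv_eq_zero (fun t => (hf t).differentiableAt) (fun t => (hf t).deriv) s t

theorem conjTranspose_mul_eq_of_skewHermitian_ode [Finite m] [Finite k]
    (hskew : ∀ t, (Φ t)ᴴ = -Φ t)
    {u : ℝ → Matrix n m 𝕜} {v : ℝ → Matrix n k 𝕜}
    (hu : ∀ t, HasDerivAt u (-Φ t * u t) t) (hv : ∀ t, HasDerivAt v (-Φ t * v t) t) (s t : ℝ) :
    (u s)ᴴ * v s = (u t)ᴴ * v t := by
  suffices hderiv : ∀ r, HasDerivAt (fun r => (u r)ᴴ * v r) 0 r by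
    ext i j
    exact eq_of_forall_hasDerivAt_zero (fun r => hasDerivAt_matrix.1 (hderiv r) i j) s t
  intro r
  have hstar : HasDerivAt (fun r => (u r)ᴴ) (-Φ r * u r)ᴴ r :=
    hasDerivAt_conjTranspose (E := 𝕜) (hu r)
  have hzero : (-Φ r * u r)ᴴ * v r + (u r)ᴴ * (-Φ r * v r) = 0 := by
    simp [conjTranspose_mul, hskew, Matrix.mul_assoc]
  exact hzero ▸ hasDerivAt_matrix_mul hstar (hv r)

variable [DecidableEq n] {u : ℝ → Matrix n n 𝕜}

theorem det_eq_of_traceless_ode (htr : ∀ t, trace (Φ t) = 0)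
    (hu : ∀ t, HasDerivAt u (-Φ t * u t) t) (s t : ℝ) : (u s).det = (u t).det := by
  refine eq_of_forall_hasDerivAt_zero (f := fun r => (u r).det) (fun r => ?_) s t
  have hzero : trace (-Φ r * u r * (u r).adjugate) = 0 := by
    simp [Matrix.mul_assoc, mul_adjugate, htr]
  exact hzero ▸ hasDerivAt_det (hu r)

theorem mem_unitaryGroup_of_skewHermitian_ode (hskew : ∀ t, (Φ t)ᴴ = -Φ t)
    (hu : ∀ t, HasDerivAt u (-Φ t * u t) t) (hu0 : u 0 = 1) (t : ℝ) :
    u t ∈ unitaryGroup n 𝕜 := by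
  rw [mem_unitaryGroup_iff', star_eq_conjTranspose,
    conjTranspose_mul_eq_of_skewHermitian_ode hskew hu hu t 0, hu0, conjTranspose_one,
    Matrix.one_mul]

theorem mem_specialUnitaryGroup_of_ode (hskew : ∀ t, (Φ t)ᴴ = -Φ t) (htr : ∀ t, trace (Φ t) = 0)
    (hu : ∀ t, HasDerivAt u (-Φ t * u t) t) (hu0 : u 0 = 1) (t : ℝ) :
    u t ∈ specialUnitaryGroup n 𝕜 := by
  have hdet : (u t).det = 1 := by rw [det_eq_of_traceless_ode htr hu t 0, hu0, det_one]
  exact mem_specialUnitaryGroup_iff.2 ⟨mem_unitaryGroup_of_skewHermitian_ode hskew hu hu0 t, hdet⟩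

theorem apply_add_period_eq_mul_of_ode (hskew : ∀ t, (Φ t)ᴴ = -Φ t) {T : ℝ}
    (hper : Function.Periodic Φ T) (hu : ∀ t, HasDerivAt u (-Φ t * u t) t) (hu0 : u 0 = 1)
    (t : ℝ) : u (t + T) = u t * u T := by
  have hshift (s : ℝ) : HasDerivAt (fun r => u (r + T)) (-Φ s * u (s + T)) s :=
    hper s ▸ (hu (s + T)).comp_add_const s T
  have hconst : (u t)ᴴ * u (t + T) = u T := by
    simpa [hu0] using conjTranspose_mul_eq_of_skewHermitian_ode hskew hu hshift t 0
  have hunit : u t * (u t)ᴴ = 1 :=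
    mem_unitaryGroup_iff.1 (mem_unitaryGroup_of_skewHermitian_ode hskew hu hu0 t)
  rw [← hconst, ← Matrix.mul_assoc, hunit, Matrix.one_mul]

theorem hasDerivAt_matrix_exp_smul (ξ : Matrix n n 𝕜) (t : ℝ) :
    HasDerivAt (fun s : ℝ => exp (s • ξ)) (ξ * exp (t • ξ)) t :=
  open scoped Norms.Operator in hasDerivAt_exp_smul_const' ξ t

theorem exp_mem_specialUnitaryGroup {ξ : Matrix n n 𝕜} (hskew : ξᴴ = -ξ) (htr : trace ξ = 0) :
    exp ξ ∈ specialUnitaryGroup n 𝕜 := by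
  have hode (t : ℝ) : HasDerivAt (fun s : ℝ => exp (s • ξ)) (-(-ξ) * exp (t • ξ)) t := by
    simpa only [neg_neg] using hasDerivAt_matrix_exp_smul ξ t
  simpa using mem_specialUnitaryGroup_of_ode (Φ := fun _ => -ξ) (by simp [hskew]) (by simp [htr])
    hode (by simp) 1

end LinearODE

section SpecialUnitaryLogarithm

open NormedSpace

theorem exists_isSelfAdjoint_exp_I_smul_eq {A : Type*} [CStarAlgebra A] {u : A}
    (hu : u ∈ unitary A) (hfin : (spectrum ℂ u).Finite) :
    ∃ H : A, IsSelfAdjoint H ∧ exp (Complex.I • H) = u := by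
  have harg : ContinuousOn (fun z => (Complex.arg z : ℂ)) (spectrum ℂ u) := hfin.continuousOn _
  have hnormal : IsStarNormal u := isStarNormal_of_mem_unitary hu
  refine ⟨cfc (fun z => (Complex.arg z : ℂ)) u, ?_, ?_⟩
  · rw [IsSelfAdjoint, ← cfc_star]
    simp only [Complex.star_def, Complex.conj_ofReal]
  · rw [← CFC.exp_eq_normedSpace_exp (𝕜 := ℂ), ← cfc_const_mul .., ← cfc_comp' ..]
    conv_rhs => rw [← cfc_id' ℂ u]
    refine cfc_congr fun z hz => ?_
    calc exp (Complex.I * z.arg) = ‖z‖ * Complex.exp (z.arg * Complex.I) := by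
          rw [spectrum.norm_eq_one_of_unitary hu hz, Complex.ofReal_one, one_mul, mul_comm,
            Complex.exp_eq_exp_ℂ]
      _ = z := Complex.norm_mul_exp_arg_mul_I z

variable {n : Type*} [Fintype n]

theorem exists_sum_eq_zero_exp_mul_I_eq {θ : n → ℝ}
    (hθ : ∏ i, Complex.exp (θ i * Complex.I) = 1) :
    ∃ η : n → ℝ, ∑ i, η i = 0 ∧
      ∀ i, Complex.exp (η i * Complex.I) = Complex.exp (θ i * Complex.I) := by
  classical
  rcases isEmpty_or_nonempty n with _ | ⟨⟨i₀⟩⟩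
  · exact ⟨θ, Fintype.sum_empty θ, fun _ => rfl⟩
  obtain ⟨k, hk⟩ : ∃ k : ℤ, ∑ i, θ i = k * (2 * π) := by
    rw [← Complex.exp_sum, ← Finset.sum_mul, Complex.exp_eq_one_iff] at hθ
    obtain ⟨k, hk⟩ := hθ
    rw [← mul_assoc] at hk
    have hsum : ∑ i, (θ i : ℂ) = k * (2 * π) := mul_right_cancel₀ Complex.I_ne_zero hk
    exact ⟨k, mod_cast hsum⟩
  refine ⟨θ - Pi.single i₀ (k * (2 * π)), by simp [hk], fun i => ?_⟩
  rcases eq_or_ne i i₀ with rfl | hi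
  · have hshift : Complex.exp (θ i * Complex.I - k * (2 * π * Complex.I)) =
        Complex.exp (θ i * Complex.I) := Complex.exp_periodic.sub_int_mul_eq k
    rw [Pi.sub_apply, Pi.single_eq_same, ← hshift]
    push_cast
    ring_nf
  · simp [hi]

variable [DecidableEq n]

theorem exp_unitary_conj {𝕜 : Type*} [RCLike 𝕜] {V : Matrix n n 𝕜} (hV : V ∈ unitaryGroup n 𝕜)
    (A : Matrix n n 𝕜) : exp (V * A * Vᴴ) = V * exp A * Vᴴ := by
  have hinv : V⁻¹ = Vᴴ := inv_eq_left_inv (mem_unitaryGroup_iff'.1 hV)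
  rw [← hinv, exp_conj V A (IsUnit.of_mul_eq_one _ (mem_unitaryGroup_iff.1 hV))]

theorem exp_diagonal_mul_I (θ : n → ℝ) :
    exp (diagonal fun i => (θ i * Complex.I : ℂ)) =
      diagonal fun i => Complex.exp (θ i * Complex.I) := by
  rw [exp_diagonal]
  congr with i
  rw [Pi.coe_exp, ← Complex.exp_eq_exp_ℂ]

theorem exists_eq_unitary_conj_diagonal_exp {U : Matrix n n ℂ} (hU : U ∈ unitaryGroup n ℂ) :
    ∃ V ∈ unitaryGroup n ℂ, ∃ θ : n → ℝ,
      U = V * (diagonal fun i => Complex.exp (θ i * Complex.I)) * Vᴴ := by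
  obtain ⟨H, hH, rfl⟩ : ∃ H : Matrix n n ℂ, H.IsHermitian ∧ exp (Complex.I • H) = U := by
    open scoped Norms.L2Operator in
    let _ : CStarAlgebra (Matrix n n ℂ) := {}
    exact exists_isSelfAdjoint_exp_I_smul_eq hU (Matrix.finite_spectrum U)
  let V : Matrix n n ℂ := hH.eigenvectorUnitary
  let θ : n → ℝ := hH.eigenvalues
  have hV : V ∈ unitaryGroup n ℂ := hH.eigenvectorUnitary.2
  have hspec : H = V * diagonal (fun i => (θ i : ℂ)) * Vᴴ := hH.spectral_theorem
  refine ⟨V, hV, θ, ?_⟩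
  have hsmul : Complex.I • H = V * (diagonal fun i => (θ i * Complex.I : ℂ)) * Vᴴ := by
    rw [hspec, ← Matrix.smul_mul, ← Matrix.mul_smul, ← diagonal_smul]
    simp only [Pi.smul_def, smul_eq_mul, mul_comm]
  rw [hsmul, exp_unitary_conj hV, exp_diagonal_mul_I]

theorem exists_exp_eq_of_mem_specialUnitaryGroup {U : Matrix n n ℂ}
    (hU : U ∈ specialUnitaryGroup n ℂ) :
    ∃ ξ : Matrix n n ℂ, ξᴴ = -ξ ∧ trace ξ = 0 ∧ exp ξ = U := by
  obtain ⟨hunit, hdet⟩ := mem_specialUnitaryGroup_iff.1 hU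
  obtain ⟨V, hV, θ, rfl⟩ := exists_eq_unitary_conj_diagonal_exp hunit
  have hVright : V * Vᴴ = 1 := mem_unitaryGroup_iff.1 hV
  have hVleft : Vᴴ * V = 1 := mem_unitaryGroup_iff'.1 hV
  rw [det_conj_of_mul_eq_one hVright hVleft, det_diagonal] at hdet
  obtain ⟨η, hsum, hexp⟩ := exists_sum_eq_zero_exp_mul_I_eq hdet
  let D : Matrix n n ℂ := diagonal fun i => η i * Complex.I
  have hDskew : Dᴴ = -D := by
    rw [diagonal_conjTranspose, diagonal_neg]
    congr with i
    simp
  have hDtr : trace D = 0 := by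
    rw [trace_diagonal, ← Finset.sum_mul, ← Complex.ofReal_sum, hsum, Complex.ofReal_zero,
      zero_mul]
  refine ⟨V * D * Vᴴ, ?_, ?_, ?_⟩
  · simp only [conjTranspose_mul, conjTranspose_conjTranspose, hDskew, Matrix.mul_assoc,
      Matrix.neg_mul, Matrix.mul_neg]
  · rw [trace_mul_cycle, hVleft, Matrix.one_mul, hDtr]
  · rw [exp_unitary_conj hV, exp_diagonal_mul_I]
    simp only [hexp]

end SpecialUnitaryLogarithm

theorem corrected_gauge_transformation_exists_general {n : Type*} [Fintype n] [DecidableEq n]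
    {T : ℝ} (hT : T ≠ 0) {Φ : ℝ → Matrix n n ℂ} (hper : Function.Periodic Φ T)
    (hskew : ∀ t, (Φ t)ᴴ = -Φ t) (htr : ∀ t, trace (Φ t) = 0) {u : ℝ → Matrix n n ℂ}
    (hu : ∀ t, HasDerivAt u (-Φ t * u t) t) (hu0 : u 0 = 1) :
    ∃ ξ : Matrix n n ℂ, ξᴴ = -ξ ∧ trace ξ = 0 ∧ u T = NormedSpace.exp ((T : ℂ) • ξ) ∧
      Function.Periodic (fun ψ : ℝ => u ψ * NormedSpace.exp (-(ψ : ℂ) • ξ)) T ∧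
      ∀ φ : ℝ, u φ * NormedSpace.exp (-(φ : ℂ) • ξ) ∈ specialUnitaryGroup n ℂ := by
  have hSU := mem_specialUnitaryGroup_of_ode hskew htr hu hu0
  obtain ⟨L, hLskew, hLtr, hLexp⟩ := exists_exp_eq_of_mem_specialUnitaryGroup (hSU T)
  let ξ : Matrix n n ℂ := (T : ℂ)⁻¹ • L
  have hξskew : ξᴴ = -ξ := by simp [ξ, conjTranspose_smul, hLskew]
  have hξtr : trace ξ = 0 := by rw [trace_smul, hLtr, smul_zero]
  have hmonodromy : u T = NormedSpace.exp ((T : ℂ) • ξ) := by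
    rw [smul_inv_smul₀ (Complex.ofReal_ne_zero.2 hT), hLexp]
  refine ⟨ξ, hξskew, hξtr, hmonodromy, fun φ => ?_, fun φ => mul_mem (hSU φ) ?_⟩
  · have habsorb : NormedSpace.exp ((T : ℂ) • ξ) * NormedSpace.exp (-((φ + T : ℝ) : ℂ) • ξ) =
        NormedSpace.exp (-(φ : ℂ) • ξ) := by
      rw [← exp_add_of_commute _ _ (((Commute.refl ξ).smul_left _).smul_right _), ← add_smul]
      push_cast
      ring_nf
    simp only [apply_add_period_eq_mul_of_ode hskew hper hu hu0 φ, hmonodromy, Matrix.mul_assoc,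
      habsorb]
  · exact exp_mem_specialUnitaryGroup (by simp [conjTranspose_smul, hξskew]) (by simp [hξtr])

/-- For the solution `u` of `u' = -Φ·u`, `u(0) = 1`, with `2π`-periodic
`su(2)`-valued continuous coefficient `Φ`, there is `ξ ∈ su(2)` with `u(2π) = exp(2πξ)`,
and the corrected map `w(φ) = u(φ)·exp(-φξ)` is a `2π`-periodic `SU(2)`-valued map. -/
theorem corrected_gauge_transformation_exists
    (Φ : ℝ → Matrix (Fin 2) (Fin 2) ℂ) (hΦ : Continuous Φ)
    (hper : ∀ t : ℝ, Φ (t + 2 * π) = Φ t)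
    (hskew : ∀ t : ℝ, (Φ t)ᴴ = -(Φ t))
    (htr : ∀ t : ℝ, Matrix.trace (Φ t) = 0)
    (u : ℝ → Matrix (Fin 2) (Fin 2) ℂ)
    (hu : ∀ t : ℝ, HasDerivAt u (-(Φ t) * u t) t)
    (hu0 : u 0 = 1) :
    ∃ ξ : Matrix (Fin 2) (Fin 2) ℂ, ξᴴ = -ξ ∧ Matrix.trace ξ = 0 ∧
      u (2 * π) = NormedSpace.exp (((2 * π : ℝ) : ℂ) • ξ) ∧
      ∀ φ : ℝ,
        (fun ψ : ℝ => u ψ * NormedSpace.exp ((-(ψ : ℂ)) • ξ)) (φ + 2 * π)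
          = (fun ψ : ℝ => u ψ * NormedSpace.exp ((-(ψ : ℂ)) • ξ)) φ ∧
        (u φ * NormedSpace.exp ((-(φ : ℂ)) • ξ))ᴴ *
          (u φ * NormedSpace.exp ((-(φ : ℂ)) • ξ)) = 1 ∧
        (u φ * NormedSpace.exp ((-(φ : ℂ)) • ξ)).det = 1 := by
  obtain ⟨ξ, hξskew, hξtr, hmonodromy, hwper, hwSU⟩ :=
    corrected_gauge_transformation_exists_general two_pi_pos.ne' hper hskew htr hu hu0
  exact ⟨ξ, hξskew, hξtr, hmonodromy, fun φ => ⟨hwper φ, (hwSU φ).1.1, (hwSU φ).2⟩⟩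
end
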